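/- Let Λ be a cyclic Nakayama artin algebra of infinite global dimension. Then φdim Λ = 0 if and only if Λ is a self-injective algebra. -/

import Mathlib

/-!
Why the theorem holds. Write `P i` for the indecomposable projectives, `S i` for their simple tops,
and `σ i` (`CyclicNakayama.soc`) for the vertex of the simple socle of the uniserial module `P i`.
By Schanuel's lemma taking syzygies is a well-defined endomorphism `L` of `K₀` (`exists_L`), which
can be computed from any surjection from a finitely generated projective; the subgroup
`L^t ⟨add M⟩` is then the image of `⟨add M⟩` under `L^t` (`closure_addGens_eq`). Every
indecomposable is a quotient of some `P i`, so `K₀` is finitely generated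
(`CyclicNakayama.finite_K0`). Both sides of the equivalence amount to `σ` being a permutation.

* If `φdim Λ = 0`, take for `M` the sum of all quotients of all `P i`: then `⟨add M⟩ = K₀` and
  `φ(M) = 0` says that `L` has full rank. A simple module `S k` is not projective, and its
  multiplicity as a direct summand is a functional on `K₀` which does not vanish at `[S k]`
  (`exists_detect`). If `S k` embedded in no `P i`, this functional would vanish on all syzygies,
  so `L` would not have full rank. Hence `σ` is surjective
  (`CyclicNakayama.soc_surjective_of_phiDim`), and so injective.
* If `σ` is injective, `P v` has no proper uniserial overmodule `W`: the projective cover of `W` is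
  some `P i` and the embedding lifts to `P v ↪ P i`, whence `σ i = σ v` and `i = v`. It follows that
  `P v` splits off from every finitely generated overmodule, by passing to a quotient in which it is
  essential (`CyclicNakayama.P_split`). So the `P v` are injective, and then so are all projectives
  (`CyclicNakayama.injective_of_soc_injective`).
* If projectives are injective, `P i` is the injective envelope of its socle, so `σ` is injective,
  hence surjective, and every indecomposable embeds in some `P j`, i.e. is a syzygy. Thus `L` is a
  surjective endomorphism of a finitely generated abelian group, hence injective
  (`CyclicNakayama.L_injective`), and `φ` vanishes identically (`phi_eq_zero_of_injective`).
-/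

/-!
Common definitions: Igusa–Todorov φ-function, syzygies, and cyclic Nakayama
algebras presented by monomial relations, following E. Sen,
"The φ-dimension of cyclic Nakayama algebras".
-/

noncomputable section

namespace PhiDim

variable (Λ : Type) [Ring Λ]

/-- A module is *uniserial* if its submodules are totally ordered by inclusion. -/
def IsUniserial (M : ModuleCat.{0} Λ) : Prop :=
  ∀ N₁ N₂ : Submodule Λ M, N₁ ≤ N₂ ∨ N₂ ≤ N₁

/-- A module is *indecomposable* if it is nonzero and admits no nontrivial
direct sum decomposition. -/
def Indec (M : ModuleCat.{0} Λ) : Prop :=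
  Nontrivial M ∧ ∀ N N' : Submodule Λ M, IsCompl N N' → N = ⊥ ∨ N' = ⊥

/-- `X` is (isomorphic to) a direct summand of `M`. -/
def IsSummand (X M : ModuleCat.{0} Λ) : Prop :=
  ∃ N N' : Submodule Λ M, IsCompl N N' ∧ Nonempty (X ≃ₗ[Λ] N)

/-- `f : P → M` is a projective cover: `P` is projective, `f` is surjective and
its kernel is superfluous in `P`. -/
def IsProjCover {P M : ModuleCat.{0} Λ} (f : P →ₗ[Λ] M) : Prop :=
  Module.Projective Λ P ∧ Function.Surjective f ∧
    ∀ N : Submodule Λ P, N ⊔ LinearMap.ker f = ⊤ → N = ⊤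

/-- `Y` is (isomorphic to) the first syzygy `Ω M`, i.e. the kernel of a
projective cover of `M`. -/
def IsSyzygy (Y M : ModuleCat.{0} Λ) : Prop :=
  ∃ (P : ModuleCat.{0} Λ) (f : P →ₗ[Λ] M), IsProjCover Λ f ∧
    Nonempty (Y ≃ₗ[Λ] LinearMap.ker f)

/-- `Y` is (isomorphic to) the `n`-th syzygy `Ω^n M`. -/
def IsNthSyzygy : ℕ → ModuleCat.{0} Λ → ModuleCat.{0} Λ → Prop
  | 0, Y, M => Nonempty (Y ≃ₗ[Λ] M)
  | n + 1, Y, M => ∃ Z : ModuleCat.{0} Λ, IsSyzygy Λ Z M ∧ IsNthSyzygy n Y Z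

/-- `M` is `Ω`-periodic: `Ω^k M ≅ M` for some `k ≥ 1`. -/
def IsPeriodic (M : ModuleCat.{0} Λ) : Prop :=
  ∃ k : ℕ, 1 ≤ k ∧ IsNthSyzygy Λ k M M

/-- Projective dimension at most `n` (via minimal projective resolutions:
the `n`-th syzygy is projective). -/
def PdimLE (M : ModuleCat.{0} Λ) (n : ℕ) : Prop :=
  ∃ Y : ModuleCat.{0} Λ, IsNthSyzygy Λ n Y M ∧ Module.Projective Λ Y

/-- `M` has infinite projective dimension. -/
def HasInfinitePdim (M : ModuleCat.{0} Λ) : Prop :=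
  ¬ ∃ n : ℕ, PdimLE Λ M n

/-- The (left) global dimension is at most `n`: every finitely generated module
has projective dimension at most `n`. -/
def GlobalDimLE (n : ℕ) : Prop :=
  ∀ M : ModuleCat.{0} Λ, Module.Finite Λ M → PdimLE Λ M n

/-- `Λ` has infinite global dimension. -/
def HasInfiniteGlobalDim : Prop := ¬ ∃ n : ℕ, GlobalDimLE Λ n

/-- `M` has composition length `n`. -/
def HasLength (M : ModuleCat.{0} Λ) (n : ℕ) : Prop :=
  ∃ s : CompositionSeries (Submodule Λ M), s.head = ⊥ ∧ s.last = ⊤ ∧ s.length = n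

/-- The socle of a uniserial module: the smallest nonzero submodule. -/
def socle (M : Type) [AddCommGroup M] [Module Λ M] : Submodule Λ M :=
  sInf {N : Submodule Λ M | N ≠ ⊥}

/-- The radical of a uniserial (local) module: the largest proper submodule. -/
def radical (M : Type) [AddCommGroup M] [Module Λ M] : Submodule Λ M :=
  sSup {N : Submodule Λ M | N ≠ ⊤}

/-- `soc M ≅ T`. -/
def SocIso (M T : ModuleCat.{0} Λ) : Prop :=
  Nonempty (socle Λ M ≃ₗ[Λ] T)

/-- `top M = M / rad M ≅ T`. -/
def TopIso (M T : ModuleCat.{0} Λ) : Prop :=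
  Nonempty ((M ⧸ radical Λ M) ≃ₗ[Λ] T)

/-- `T` is a composition factor (a simple subquotient) of `M`. -/
def IsCompFactorOf (T M : ModuleCat.{0} Λ) : Prop :=
  ∃ (N₁ : Submodule Λ M) (N₀ : Submodule Λ N₁),
    Nonempty ((N₁ ⧸ N₀) ≃ₗ[Λ] T)

/-- The number of composition factors of a composition series `s` of `M`
isomorphic to `T`. -/
def factorCount (M : ModuleCat.{0} Λ) (s : CompositionSeries (Submodule Λ M))
    (T : ModuleCat.{0} Λ) : ℕ :=
  Nat.card {i : Fin s.length //
    Nonempty ((s i.succ ⧸ Submodule.comap (s i.succ).subtype (s i.castSucc)) ≃ₗ[Λ] T)}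

/-! ### The Igusa–Todorov function φ -/

/-- Finitely generated modules. -/
def FGMod := {M : ModuleCat.{0} Λ // Module.Finite Λ M}

/-- Generators of the relations defining `K₀`: `[C] - [A] - [B]` for `C ≅ A ⊕ B`,
and `[P]` for `P` projective. -/
def K0RelSet : Set (FreeAbelianGroup (FGMod Λ)) :=
  {x | ∃ A B C : FGMod Λ, Nonempty ((C.1 : Type) ≃ₗ[Λ] ((A.1 : Type) × (B.1 : Type))) ∧
        x = FreeAbelianGroup.of C - FreeAbelianGroup.of A - FreeAbelianGroup.of B} ∪
  {x | ∃ P : FGMod Λ, Module.Projective Λ P.1 ∧ x = FreeAbelianGroup.of P}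

def K0Rel : AddSubgroup (FreeAbelianGroup (FGMod Λ)) :=
  AddSubgroup.closure (K0RelSet Λ)

/-- `K₀`: the free abelian group on finitely generated modules, modulo
`[A ⊕ B] = [A] + [B]` and `[P] = 0` for projective `P`. -/
def K0 := FreeAbelianGroup (FGMod Λ) ⧸ K0Rel Λ

instance : AddCommGroup (K0 Λ) := QuotientAddGroup.Quotient.addCommGroup _

/-- The class `[M]` of a finitely generated module in `K₀`. -/
def classOf (M : FGMod Λ) : K0 Λ := QuotientAddGroup.mk (FreeAbelianGroup.of M)

/-- Generators of the subgroup `L^t ⟨add M⟩` of `K₀`: classes of `t`-th syzygies of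
the indecomposable direct summands of `M`. -/
def addGens (M : ModuleCat.{0} Λ) (t : ℕ) : Set (K0 Λ) :=
  {k | ∃ X : ModuleCat.{0} Λ, Indec Λ X ∧ IsSummand Λ X M ∧
        ∃ Y : FGMod Λ, IsNthSyzygy Λ t Y.1 X ∧ k = classOf Λ Y}

/-- The rank of `L^t ⟨add M⟩`. -/
def syzygyRank (M : ModuleCat.{0} Λ) (t : ℕ) : Cardinal :=
  Module.rank ℤ (AddSubgroup.closure (addGens Λ M t))

/-- The Igusa–Todorov function
`φ(M) = min { t | rank L^t ⟨add M⟩ = rank L^{t+j} ⟨add M⟩ for all j ≥ 1 }`. -/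
def phi (M : ModuleCat.{0} Λ) : ℕ :=
  sInf {t : ℕ | ∀ j : ℕ, 1 ≤ j → syzygyRank Λ M (t + j) = syzygyRank Λ M t}

/-- `φdim Λ = sup { φ(M) | M a finitely generated Λ-module }`. -/
def phiDim : ℕ∞ := ⨆ M : FGMod Λ, (phi Λ M.1 : ℕ∞)

/-- Isomorphism of modules as a setoid on `ModuleCat Λ`. -/
def isoSetoid : Setoid (ModuleCat.{0} Λ) where
  r M N := Nonempty (M ≃ₗ[Λ] N)
  iseqv := ⟨fun M => ⟨LinearEquiv.refl Λ M⟩, fun ⟨e⟩ => ⟨e.symm⟩, fun ⟨e⟩ ⟨f⟩ => ⟨e.trans f⟩⟩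

/-- `α(X)`: the number of pairwise non-isomorphic, non-projective, indecomposable
direct summands of `X`. -/
def alpha (X : ModuleCat.{0} Λ) : ℕ :=
  Nat.card {c : Quotient (isoSetoid Λ) // ∃ Y : ModuleCat.{0} Λ,
    Quotient.mk (isoSetoid Λ) Y = c ∧ Indec Λ Y ∧ ¬ Module.Projective Λ Y ∧ IsSummand Λ Y X}

/-! ### Cyclic Nakayama algebras presented by monomial relations -/

/-- A cyclic Nakayama artin algebra `Λ` on `N ≥ 3` vertices, presented by an
irredundant system of `r` monomial relations `α_{k_{2j}} ⋯ α_{k_{2j-1}} = 0`.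

* `S i` (for `i : ZMod N`) are the simple modules attached to the vertices of the
  cyclic quiver, `P i` a projective cover of `S i`, and `c i` the composition length
  of `P i` (the Kupisch series).
* `layer` expresses that the arrows of the quiver are exactly `α_i : i → i+1`:
  the radical of an indecomposable module with top `S i`, when nonzero, has top `S (i+1)`.
* `kOdd j = k_{2j-1}` and `kEven j = k_{2j}` record the start and end indices of the
  `j`-th relation; irredundancy and completeness of the system of relations is recorded
  by `relation_starts` (the chain of inclusions `P_v ↪ P_{v-1}` breaks exactly at the
  starting vertices of the relations); `relation_ends` says that the `j`-th relation
  is a path from `k_{2j-1}` to `k_{2j} + 1` consisting of `c (k_{2j-1})` arrows. -/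
structure CyclicNakayama (R : Type) (Λ : Type) [CommRing R] [Ring Λ] [Algebra R Λ] where
  artinianBase : IsArtinianRing R
  finiteAlgebra : Module.Finite R Λ
  N : ℕ
  three_le_N : 3 ≤ N
  r : ℕ
  one_le_r : 1 ≤ r
  S : ZMod N → ModuleCat.{0} Λ
  S_simple : ∀ i, IsSimpleModule Λ (S i)
  S_complete : ∀ T : ModuleCat.{0} Λ, IsSimpleModule Λ T → ∃ i, Nonempty (T ≃ₗ[Λ] S i)
  S_distinct : ∀ i j, Nonempty (S i ≃ₗ[Λ] S j) → i = j
  nakayama : ∀ M : ModuleCat.{0} Λ, Module.Finite Λ M → Indec Λ M → IsUniserial Λ M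
  P : ZMod N → ModuleCat.{0} Λ
  P_finite : ∀ i, Module.Finite Λ (P i)
  P_projective : ∀ i, Module.Projective Λ (P i)
  P_cover : ∀ i, ∃ f : P i →ₗ[Λ] S i, IsProjCover Λ f
  c : ZMod N → ℕ
  P_length : ∀ i, HasLength Λ (P i) (c i)
  two_le_c : ∀ i, 2 ≤ c i
  layer : ∀ M : ModuleCat.{0} Λ, Module.Finite Λ M → Indec Λ M → ∀ i : ZMod N,
    TopIso Λ M (S i) → radical Λ M ≠ ⊥ →
      TopIso Λ (ModuleCat.of Λ (radical Λ M)) (S (i + 1))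
  kOdd : ZMod r → ZMod N
  kEven : ZMod r → ZMod N
  kOdd_mono : ∀ j j' : ZMod r, j.val < j'.val → (kOdd j).val < (kOdd j').val
  relation_starts : ∀ v : ZMod N, (∃ j, kOdd j = v) ↔ c v ≠ c (v + 1) + 1
  relation_ends : ∀ j, kEven j + 1 = kOdd j + (c (kOdd j) : ZMod N)
  soc_min : ∀ j, SocIso Λ (P (kOdd j)) (S (kEven j))
  soc_classes : ∀ v : ZMod N, ∃ j, SocIso Λ (P v) (S (kEven j))

variable {R : Type} [CommRing R]
variable {Λ} [Algebra R Λ]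

/-- `D` is (a representative of) the module `Δ_j`: a shortest indecomposable module
with top `S_{k_{2(j-1)} + 1}` and socle `S_{k_{2j}}`. -/
def IsDelta (pres : CyclicNakayama R Λ) (j : ZMod pres.r) (D : ModuleCat.{0} Λ) : Prop :=
  Module.Finite Λ D ∧ Indec Λ D ∧
    TopIso Λ D (pres.S (pres.kEven (j - 1) + 1)) ∧ SocIso Λ D (pres.S (pres.kEven j)) ∧
    ∀ D' : ModuleCat.{0} Λ, Module.Finite Λ D' → Indec Λ D' →
      TopIso Λ D' (pres.S (pres.kEven (j - 1) + 1)) → SocIso Λ D' (pres.S (pres.kEven j)) →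
      ∀ n n' : ℕ, HasLength Λ D n → HasLength Λ D' n' → n ≤ n'

/-- `M` is a `Δ`-module: it admits a finite filtration whose successive subquotients
are isomorphic to modules among `Δ_1, …, Δ_r`. -/
def IsDeltaModule (pres : CyclicNakayama R Λ) (Δ : ZMod pres.r → ModuleCat.{0} Λ)
    (M : ModuleCat.{0} Λ) : Prop :=
  ∃ (n : ℕ) (F : Fin (n + 1) → Submodule Λ M), Monotone F ∧ F 0 = ⊥ ∧ F (Fin.last n) = ⊤ ∧
    ∀ i : Fin n, ∃ j : ZMod pres.r,
      Nonempty ((F i.succ ⧸ Submodule.comap (F i.succ).subtype (F i.castSucc)) ≃ₗ[Λ] Δ j)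

end PhiDim

namespace PhiDim

variable {Λ : Type} [Ring Λ]

/-! ### The group `K₀` and the syzygy operator -/

/-- The class in `K₀` of an unbundled finitely generated module. -/
def cl (Λ : Type) [Ring Λ] (M : Type) [AddCommGroup M] [Module Λ M] [h : Module.Finite Λ M] :
    K0 Λ :=
  classOf Λ ⟨ModuleCat.of Λ M, h⟩

section K0

variable {A B C : Type} [AddCommGroup A] [AddCommGroup B] [AddCommGroup C]
  [Module Λ A] [Module Λ B] [Module Λ C]
  [Module.Finite Λ A] [Module.Finite Λ B] [Module.Finite Λ C]

lemma mk_eq_zero {x : FreeAbelianGroup (FGMod Λ)} (hx : x ∈ K0RelSet Λ) :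
    (QuotientAddGroup.mk' (K0Rel Λ)) x = 0 :=
  (QuotientAddGroup.eq_zero_iff x).2 (AddSubgroup.subset_closure hx)

lemma cl_add (e : C ≃ₗ[Λ] A × B) : cl Λ C = cl Λ A + cl Λ B := by
  have hA : Module.Finite Λ A := inferInstance
  have hB : Module.Finite Λ B := inferInstance
  have hC : Module.Finite Λ C := inferInstance
  have h := mk_eq_zero (Λ := Λ) (Or.inl ⟨⟨ModuleCat.of Λ A, hA⟩, ⟨ModuleCat.of Λ B, hB⟩,
    ⟨ModuleCat.of Λ C, hC⟩, ⟨e⟩, rfl⟩)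
  rw [map_sub, map_sub, sub_sub, sub_eq_zero] at h
  exact h

lemma cl_proj [Module.Projective Λ A] : cl Λ A = 0 := by
  have hA : Module.Finite Λ A := inferInstance
  exact mk_eq_zero (Λ := Λ) (Or.inr ⟨⟨ModuleCat.of Λ A, hA⟩, ‹_›, rfl⟩)

lemma cl_subsingleton [Subsingleton A] : cl Λ A = 0 := by
  have : Module.Projective Λ A := Module.Projective.of_free
  exact cl_proj

lemma cl_congr (e : A ≃ₗ[Λ] B) : cl Λ A = cl Λ B := by
  have h := cl_add (C := A) (A := B) (B := PUnit)
    (e.trans (LinearEquiv.prodUnique (R := Λ) (M := B) (M₂ := PUnit)).symm)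
  rw [h, cl_subsingleton (A := PUnit), add_zero]

/-- A homomorphism out of `K₀` is the same as an additive function on finitely generated modules
that vanishes on projectives. -/
lemma exists_K0_hom {G : Type*} [AddCommGroup G] (F : FGMod Λ → G)
    (hadd : ∀ A B C : FGMod Λ, Nonempty ((C.1 : Type) ≃ₗ[Λ] ((A.1 : Type) × (B.1 : Type))) →
      F C = F A + F B)
    (hproj : ∀ P : FGMod Λ, Module.Projective Λ P.1 → F P = 0) :
    ∃ f : K0 Λ →+ G, ∀ A, f (classOf Λ A) = F A := by
  refine ⟨QuotientAddGroup.lift (K0Rel Λ) (FreeAbelianGroup.lift F) ?_, fun A => ?_⟩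
  · refine (AddSubgroup.closure_le _).2 ?_
    rintro x (⟨A, B, C, e, rfl⟩ | ⟨P, hP, rfl⟩)
    · simp [hadd A B C e]
    · simp [hproj P hP]
  · simp only [classOf]
    exact FreeAbelianGroup.lift_apply_of F A

lemma K0_eq_top (H : AddSubgroup (K0 Λ)) (h : ∀ A : FGMod Λ, classOf Λ A ∈ H) : H = ⊤ := by
  refine (AddSubgroup.eq_top_iff' H).2 fun x => ?_
  obtain ⟨y, rfl⟩ := QuotientAddGroup.mk'_surjective (K0Rel Λ) x
  induction y using FreeAbelianGroup.induction_on with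
  | zero => rw [map_zero]; exact H.zero_mem
  | of A => exact h A
  | neg A hA => rw [map_neg]; exact H.neg_mem hA
  | add x y hx hy => rw [map_add]; exact H.add_mem hx hy

end K0

section Schanuel

variable {A Q Q' : Type} [AddCommGroup A] [AddCommGroup Q] [AddCommGroup Q']
  [Module Λ A] [Module Λ Q'] [Module Λ Q]

/-- The pullback of a surjection `f : Q → A` along a map `f' : Q' → A` from a projective module
splits as `ker f × Q'`. -/
lemma pullback_split [Module.Projective Λ Q'] (f : Q →ₗ[Λ] A) (f' : Q' →ₗ[Λ] A)
    (hf : Function.Surjective f) :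
    Nonempty (LinearMap.ker (f.coprod (-f')) ≃ₗ[Λ] LinearMap.ker f × Q') := by
  obtain ⟨s, hs⟩ := Module.projective_lifting_property f f' hf
  have hs' : ∀ x, f (s x) = f' x := fun x => LinearMap.congr_fun hs x
  refine ⟨LinearEquiv.ofLinearMap
    (LinearMap.prod (LinearMap.codRestrict _
        ((LinearMap.fst Λ Q Q' - s ∘ₗ LinearMap.snd Λ Q Q') ∘ₗ Submodule.subtype _) ?_)
      (LinearMap.snd Λ Q Q' ∘ₗ Submodule.subtype _))
    (LinearMap.codRestrict _
      (LinearMap.prod ((Submodule.subtype _).coprod s) (LinearMap.snd Λ _ Q')) ?_) ?_ ?_⟩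
  · rintro ⟨⟨x, y⟩, h⟩
    simp only [LinearMap.mem_ker, LinearMap.coprod_apply, LinearMap.neg_apply] at h
    simpa [hs', sub_eq_add_neg] using h
  · rintro ⟨⟨x, hx⟩, y⟩
    have hx' : f x = 0 := hx
    simp [hs', hx']
  · ext x <;> simp
  · ext x <;> simp

lemma schanuel [Module.Projective Λ Q] [Module.Projective Λ Q']
    (f : Q →ₗ[Λ] A) (f' : Q' →ₗ[Λ] A)
    (hf : Function.Surjective f) (hf' : Function.Surjective f') :
    Nonempty ((LinearMap.ker f × Q') ≃ₗ[Λ] (LinearMap.ker f' × Q)) := by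
  obtain ⟨e'⟩ := pullback_split f' f hf'
  obtain ⟨e⟩ := pullback_split f f' hf
  -- the two pullbacks are exchanged by swapping coordinates
  let σ : LinearMap.ker (f.coprod (-f')) ≃ₗ[Λ] LinearMap.ker (f'.coprod (-f)) :=
    (LinearEquiv.prodComm Λ Q Q').ofSubmodules _ _ (by
      ext ⟨x, y⟩
      simp only [Submodule.mem_map_equiv, LinearMap.mem_ker, LinearMap.coprod_apply,
        LinearMap.neg_apply]
      change f y + -f' x = 0 ↔ _
      rw [← sub_eq_add_neg, ← sub_eq_add_neg, sub_eq_zero, sub_eq_zero, eq_comm])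
  exact ⟨e.symm.trans (σ.trans e')⟩

end Schanuel

/-- The submodule `p × q` of `A × B` as a product of modules. -/
def prodSubmoduleEquiv {A B : Type} [AddCommGroup A] [AddCommGroup B] [Module Λ A] [Module Λ B]
    (p : Submodule Λ A) (q : Submodule Λ B) : p.prod q ≃ₗ[Λ] p × q where
  toFun x := (⟨x.1.1, x.2.1⟩, ⟨x.1.2, x.2.2⟩)
  invFun x := ⟨(x.1.1, x.2.1), x.1.2, x.2.2⟩
  map_add' _ _ := rfl
  map_smul' _ _ := rfl

section Syzygy

/-- The source of a projective cover of a finitely generated module is finitely generated. -/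
lemma IsProjCover.finite {P M : ModuleCat.{0} Λ} {f : P →ₗ[Λ] M} (hf : IsProjCover Λ f)
    [Module.Finite Λ M] : Module.Finite Λ P := by
  obtain ⟨-, hs, hsup⟩ := hf
  obtain ⟨n, g, hg⟩ := Module.Finite.exists_fin' Λ M
  obtain ⟨h, hh⟩ := Module.projective_lifting_property f g hs
  have htop : LinearMap.range h ⊔ LinearMap.ker f = ⊤ := by
    refine eq_top_iff.2 fun x _ => ?_
    obtain ⟨y, hy⟩ := hg (f x)
    have hxy : f (h y) = f x := by rw [← hy, ← hh]; rfl
    have := Submodule.add_mem_sup (S := LinearMap.range h) (T := LinearMap.ker f)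
      (LinearMap.mem_range_self h y) (show x - h y ∈ LinearMap.ker f by simp [hxy])
    simpa using this
  exact Module.Finite.of_surjective h (LinearMap.range_eq_top.1 (hsup _ htop))

variable [IsArtinianRing Λ]

lemma cl_ker_eq {A Q Q' : Type} [AddCommGroup A] [AddCommGroup Q] [AddCommGroup Q']
    [Module Λ A] [Module Λ Q] [Module Λ Q'] [Module.Finite Λ Q] [Module.Finite Λ Q']
    [Module.Projective Λ Q] [Module.Projective Λ Q']
    (f : Q →ₗ[Λ] A) (f' : Q' →ₗ[Λ] A)
    (hf : Function.Surjective f) (hf' : Function.Surjective f') :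
    cl Λ (LinearMap.ker f) = cl Λ (LinearMap.ker f') := by
  obtain ⟨e⟩ := schanuel f f' hf hf'
  have h := cl_congr e
  rw [cl_add (LinearEquiv.refl Λ (LinearMap.ker f × Q')),
    cl_add (LinearEquiv.refl Λ (LinearMap.ker f' × Q)), cl_proj (A := Q), cl_proj (A := Q')] at h
  simpa using h

/-- The syzygy operator `L` on `K₀`. By Schanuel's lemma it may be computed from any surjection
from a finitely generated projective module. -/
lemma exists_L : ∃ L : K0 Λ →+ K0 Λ, ∀ (A Q : Type) [AddCommGroup A] [AddCommGroup Q]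
    [Module Λ A] [Module Λ Q] [Module.Finite Λ A] [Module.Finite Λ Q] [Module.Projective Λ Q]
    (f : Q →ₗ[Λ] A), Function.Surjective f → L (cl Λ A) = cl Λ (LinearMap.ker f) := by
  have hex : ∀ A : FGMod Λ, ∃ k : K0 Λ, ∀ (Q : Type) [AddCommGroup Q] [Module Λ Q]
      [Module.Finite Λ Q] [Module.Projective Λ Q] (f : Q →ₗ[Λ] A.1), Function.Surjective f →
      k = cl Λ (LinearMap.ker f) := by
    intro A
    have := A.2
    obtain ⟨n, f, hf⟩ := Module.Finite.exists_fin' Λ A.1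
    exact ⟨cl Λ (LinearMap.ker f), fun Q _ _ _ _ g hg => cl_ker_eq f g hf hg⟩
  choose F hF using hex
  have hadd : ∀ A B C : FGMod Λ, Nonempty ((C.1 : Type) ≃ₗ[Λ] ((A.1 : Type) × (B.1 : Type))) →
      F C = F A + F B := by
    rintro A B C ⟨e⟩
    have := A.2
    have := B.2
    obtain ⟨n, f, hf⟩ := Module.Finite.exists_fin' Λ A.1
    obtain ⟨m, g, hg⟩ := Module.Finite.exists_fin' Λ B.1
    have hsurj : Function.Surjective (e.symm.toLinearMap ∘ₗ f.prodMap g) := by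
      rw [LinearMap.coe_comp]
      exact e.symm.surjective.comp (Function.Surjective.prodMap hf hg)
    rw [hF A _ f hf, hF B _ g hg, hF C _ _ hsurj]
    have hk : LinearMap.ker (e.symm.toLinearMap ∘ₗ f.prodMap g)
        = (LinearMap.ker f).prod (LinearMap.ker g) := by
      rw [LinearEquiv.ker_comp]
      exact LinearMap.ker_prodMap f g
    exact cl_add ((LinearEquiv.ofEq _ _ hk).trans (prodSubmoduleEquiv _ _))
  have hproj : ∀ P : FGMod Λ, Module.Projective Λ P.1 → F P = 0 := by
    intro P hP
    have := P.2
    rw [hF P P.1 LinearMap.id Function.surjective_id]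
    have : Subsingleton (LinearMap.ker (LinearMap.id : P.1 →ₗ[Λ] P.1)) := by
      rw [LinearMap.ker_id]; infer_instance
    exact cl_subsingleton
  obtain ⟨L, hL⟩ := exists_K0_hom F hadd hproj
  refine ⟨L, fun A Q _ _ _ _ hA _ _ f hf => ?_⟩
  exact (hL ⟨ModuleCat.of Λ A, hA⟩).trans (hF ⟨ModuleCat.of Λ A, hA⟩ Q f hf)

/-- The syzygy operator `[M] ↦ [Ω M]` on `K₀`. -/
def L (Λ : Type) [Ring Λ] [IsArtinianRing Λ] : K0 Λ →+ K0 Λ := exists_L.choose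

lemma L_cl {A Q : Type} [AddCommGroup A] [AddCommGroup Q]
    [Module Λ A] [Module Λ Q] [Module.Finite Λ A] [Module.Finite Λ Q] [Module.Projective Λ Q]
    (f : Q →ₗ[Λ] A) (hf : Function.Surjective f) : L Λ (cl Λ A) = cl Λ (LinearMap.ker f) :=
  exists_L.choose_spec A Q f hf

lemma IsSyzygy.L_eq {Y M : ModuleCat.{0} Λ} (h : IsSyzygy Λ Y M) (hM : Module.Finite Λ M) :
    ∃ hY : Module.Finite Λ Y, L Λ (classOf Λ ⟨M, hM⟩) = classOf Λ ⟨Y, hY⟩ := by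
  obtain ⟨P, f, hf, ⟨e⟩⟩ := h
  have := hf.finite
  have := hf.1
  have hY : Module.Finite Λ Y := Module.Finite.equiv e.symm
  exact ⟨hY, (L_cl f hf.2.1).trans (cl_congr e.symm)⟩

lemma IsNthSyzygy.L_eq (t : ℕ) {Y M : ModuleCat.{0} Λ} (h : IsNthSyzygy Λ t Y M)
    (hM : Module.Finite Λ M) (hY : Module.Finite Λ Y) :
    classOf Λ ⟨Y, hY⟩ = (L Λ)^[t] (classOf Λ ⟨M, hM⟩) := by
  induction t generalizing M with
  | zero => obtain ⟨e⟩ := h; exact cl_congr e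
  | succ n ih =>
    obtain ⟨Z, hZ, hYZ⟩ := h
    obtain ⟨hZf, hL⟩ := hZ.L_eq hM
    rw [ih hYZ hZf, Function.iterate_succ_apply, hL]

end Syzygy
end PhiDim
namespace PhiDim

variable {Λ : Type} [Ring Λ]

/-! ### Ranks of the groups `L^t ⟨add M⟩` -/

section Rank

variable [IsArtinianRing Λ]

lemma IsSummand.finite {X M : ModuleCat.{0} Λ} (h : IsSummand Λ X M) (hM : Module.Finite Λ M) :
    Module.Finite Λ X := by
  obtain ⟨N, -, -, ⟨e⟩⟩ := h
  exact Module.Finite.equiv e.symm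

/-- The generators of `L^t ⟨add M⟩`, described through the operator `L`, provided that all
syzygies of indecomposable modules exist. -/
lemma addGens_eq
    (hex : ∀ X : ModuleCat.{0} Λ, Module.Finite Λ X → Indec Λ X → ∀ t, ∃ Y : ModuleCat.{0} Λ,
      Module.Finite Λ Y ∧ IsNthSyzygy Λ t Y X)
    (M : ModuleCat.{0} Λ) (hM : Module.Finite Λ M) (t : ℕ) :
    addGens Λ M t = (L Λ)^[t] '' addGens Λ M 0 := by
  ext k
  constructor
  · rintro ⟨X, hX, hXM, Y, hY, rfl⟩
    have hXf := hXM.finite hM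
    exact ⟨classOf Λ ⟨X, hXf⟩, ⟨X, hX, hXM, ⟨X, hXf⟩, ⟨LinearEquiv.refl Λ X⟩, rfl⟩,
      (hY.L_eq t hXf Y.2).symm⟩
  · rintro ⟨_, ⟨X, hX, hXM, Y, hY, rfl⟩, rfl⟩
    have hXf := hXM.finite hM
    obtain ⟨Z, hZf, hZ⟩ := hex X hXf hX t
    refine ⟨X, hX, hXM, ⟨Z, hZf⟩, hZ, ?_⟩
    rw [IsNthSyzygy.L_eq t hZ hXf hZf]
    exact congrArg _ (IsNthSyzygy.L_eq 0 hY hXf Y.2)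

/-- The `t`-th power of the syzygy operator, as an iterated composition. -/
def Lpow (Λ : Type) [Ring Λ] [IsArtinianRing Λ] (t : ℕ) : K0 Λ →+ K0 Λ :=
  AddMonoidHom.mk' (L Λ)^[t] (iterate_map_add (L Λ) t)

lemma Lpow_coe (t : ℕ) : ⇑(Lpow Λ t) = (L Λ)^[t] := rfl

lemma closure_addGens_eq
    (hex : ∀ X : ModuleCat.{0} Λ, Module.Finite Λ X → Indec Λ X → ∀ t, ∃ Y : ModuleCat.{0} Λ,
      Module.Finite Λ Y ∧ IsNthSyzygy Λ t Y X)
    (M : ModuleCat.{0} Λ) (hM : Module.Finite Λ M) (t : ℕ) :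
    AddSubgroup.closure (addGens Λ M t)
      = (AddSubgroup.closure (addGens Λ M 0)).map (Lpow Λ t) := by
  rw [addGens_eq hex M hM t, AddMonoidHom.map_closure, Lpow_coe]

lemma rank_addSubgroup_map_le {G H : Type 1} [AddCommGroup G] [AddCommGroup H] (f : G →+ H)
    (K : AddSubgroup G) : Module.rank ℤ (K.map f) ≤ Module.rank ℤ K :=
  LinearMap.rank_le_of_surjective (f.addSubgroupMap K).toIntLinearMap
    (f.addSubgroupMap_surjective K)

/-- If the operator `L` is injective then `φ` vanishes identically. -/
lemma phi_eq_zero_of_injective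
    (hex : ∀ X : ModuleCat.{0} Λ, Module.Finite Λ X → Indec Λ X → ∀ t, ∃ Y : ModuleCat.{0} Λ,
      Module.Finite Λ Y ∧ IsNthSyzygy Λ t Y X)
    (hL : Function.Injective (L Λ)) (M : ModuleCat.{0} Λ) (hM : Module.Finite Λ M) :
    phi Λ M = 0 := by
  refine Nat.sInf_eq_zero.2 (Or.inl fun j _ => ?_)
  have hinj : Function.Injective (Lpow Λ j) := by
    rw [Lpow_coe]; exact hL.iterate j
  rw [zero_add, syzygyRank, syzygyRank, closure_addGens_eq hex M hM j]
  exact ((AddSubgroup.equivMapOfInjective _ _ hinj).toIntLinearEquiv.rank_eq).symm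

/-- If `φ(M) = 0` then already the first application of `L` does not lower the rank of
`⟨add M⟩`. -/
lemma rank_one_eq_of_phi_eq_zero
    (hex : ∀ X : ModuleCat.{0} Λ, Module.Finite Λ X → Indec Λ X → ∀ t, ∃ Y : ModuleCat.{0} Λ,
      Module.Finite Λ Y ∧ IsNthSyzygy Λ t Y X)
    (M : ModuleCat.{0} Λ) (hM : Module.Finite Λ M) (h : phi Λ M = 0) :
    syzygyRank Λ M 1 = syzygyRank Λ M 0 := by
  -- the ranks decrease along `t`, so the set defining `φ` is nonempty
  have hanti : ∀ t j, syzygyRank Λ M (t + j) ≤ syzygyRank Λ M t := by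
    intro t j
    have hmap : AddSubgroup.closure (addGens Λ M (t + j))
        = (AddSubgroup.closure (addGens Λ M t)).map (Lpow Λ j) := by
      rw [closure_addGens_eq hex M hM (t + j), closure_addGens_eq hex M hM t,
        AddSubgroup.map_map]
      congr 1
      ext x
      rw [AddMonoidHom.comp_apply, Lpow_coe, Lpow_coe, Lpow_coe, add_comm t j,
        Function.iterate_add_apply]
    have := rank_addSubgroup_map_le (Lpow Λ j) (AddSubgroup.closure (addGens Λ M t))
    rw [← hmap] at this
    exact this
  have hne : {t : ℕ | ∀ j : ℕ, 1 ≤ j →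
      syzygyRank Λ M (t + j) = syzygyRank Λ M t}.Nonempty := by
    have hwf : WellFounded ((· < ·) : Cardinal.{1} → Cardinal.{1} → Prop) := wellFounded_lt
    obtain ⟨c, ⟨t, rfl⟩, hmin⟩ := hwf.has_min (Set.range (syzygyRank Λ M)) ⟨_, 0, rfl⟩
    exact ⟨t, fun j _ => le_antisymm (hanti t j) (not_lt.1 (hmin _ ⟨t + j, rfl⟩))⟩
  rcases Nat.sInf_eq_zero.1 h with h0 | h0
  · simpa using h0 1 le_rfl
  · exact absurd h0 hne.ne_empty

end Rank
end PhiDim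
namespace PhiDim

variable {Λ : Type} [Ring Λ]

/-! ### Detecting a simple module in `K₀` -/

section Detect

/-- A subfunctor of the identity functor (a preradical) has additive length. -/
lemma length_preradical_add (F : ∀ (M : Type) [AddCommGroup M] [Module Λ M], Submodule Λ M)
    (hF : ∀ (M N : Type) [AddCommGroup M] [Module Λ M] [AddCommGroup N] [Module Λ N]
      (h : M →ₗ[Λ] N), ∀ x ∈ F M, h x ∈ F N)
    {A B C : Type} [AddCommGroup A] [AddCommGroup B] [AddCommGroup C]
    [Module Λ A] [Module Λ B] [Module Λ C] (e : C ≃ₗ[Λ] A × B) :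
    Module.length Λ (F C) = Module.length Λ (F A) + Module.length Λ (F B) := by
  have hmap : (F C).map (e : C →ₗ[Λ] A × B) = (F A).prod (F B) := by
    ext ⟨a, b⟩
    rw [Submodule.mem_prod, Submodule.mem_map_equiv]
    constructor
    · intro h
      have ha := hF C A (LinearMap.fst Λ A B ∘ₗ e.toLinearMap) _ h
      have hb := hF C B (LinearMap.snd Λ A B ∘ₗ e.toLinearMap) _ h
      simp only [LinearMap.comp_apply, LinearEquiv.coe_coe, e.apply_symm_apply] at ha hb
      exact ⟨ha, hb⟩
    · rintro ⟨ha, hb⟩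
      have ha' := hF A C (e.symm.toLinearMap ∘ₗ LinearMap.inl Λ A B) _ ha
      have hb' := hF B C (e.symm.toLinearMap ∘ₗ LinearMap.inr Λ A B) _ hb
      have := (F C).add_mem ha' hb'
      simpa [← map_add] using this
  rw [(e.submoduleMap (F C)).length_eq, hmap, (prodSubmoduleEquiv _ _).length_eq,
    Module.length_prod]

variable (S : Type) [AddCommGroup S] [Module Λ S]

/-- The trace of `S` in `M`: the sum of the images of all maps `S → M`. -/
def tr (M : Type) [AddCommGroup M] [Module Λ M] : Submodule Λ M :=
  ⨆ f : S →ₗ[Λ] M, LinearMap.range f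

/-- The reject of `S` in `M`: the intersection of the kernels of all maps `M → S`. -/
def rej (M : Type) [AddCommGroup M] [Module Λ M] : Submodule Λ M :=
  ⨅ g : M →ₗ[Λ] S, LinearMap.ker g

lemma tr_map (M N : Type) [AddCommGroup M] [Module Λ M] [AddCommGroup N] [Module Λ N]
    (h : M →ₗ[Λ] N) : ∀ x ∈ tr (Λ := Λ) S M, h x ∈ tr (Λ := Λ) S N := by
  have : tr (Λ := Λ) S M ≤ (tr (Λ := Λ) S N).comap h := by
    refine iSup_le fun f => ?_
    rintro _ ⟨y, rfl⟩
    exact (le_iSup (fun f : S →ₗ[Λ] N => LinearMap.range f) (h ∘ₗ f)) ⟨y, rfl⟩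
  exact this

lemma rej_map (M N : Type) [AddCommGroup M] [Module Λ M] [AddCommGroup N] [Module Λ N]
    (h : M →ₗ[Λ] N) : ∀ x ∈ rej (Λ := Λ) S M, h x ∈ rej (Λ := Λ) S N := by
  intro x hx
  simp only [rej, Submodule.mem_iInf, LinearMap.mem_ker] at hx ⊢
  exact fun g => hx (g ∘ₗ h)

variable [IsArtinianRing Λ]

/-- For a nonprojective simple module `S`, the multiplicity of `S` as a direct summand,
expressed as the difference of the lengths of the trace of `S` and of its intersection with the
reject of `S`, is a homomorphism on `K₀`. -/
lemma exists_detect [IsSimpleModule Λ S] (hS : ¬ Module.Projective Λ S) [Module.Finite Λ S] :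
    ∃ ψ : K0 Λ →+ ℤ, ψ (cl Λ S) ≠ 0 ∧
      ∀ (N : Type) [AddCommGroup N] [Module Λ N] [Module.Finite Λ N],
        (∀ f : S →ₗ[Λ] N, f = 0) → ψ (cl Λ N) = 0 := by
  let F₁ : ∀ (M : Type) [AddCommGroup M] [Module Λ M], Submodule Λ M := fun M _ _ => tr S M
  let F₂ : ∀ (M : Type) [AddCommGroup M] [Module Λ M], Submodule Λ M :=
    fun M _ _ => tr S M ⊓ rej S M
  have hF₁ : ∀ {A B C : Type} [AddCommGroup A] [AddCommGroup B] [AddCommGroup C]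
      [Module Λ A] [Module Λ B] [Module Λ C] (e : C ≃ₗ[Λ] A × B),
      Module.length Λ (F₁ C) = Module.length Λ (F₁ A) + Module.length Λ (F₁ B) :=
    fun e => length_preradical_add F₁ (tr_map S) e
  have hF₂ : ∀ {A B C : Type} [AddCommGroup A] [AddCommGroup B] [AddCommGroup C]
      [Module Λ A] [Module Λ B] [Module Λ C] (e : C ≃ₗ[Λ] A × B),
      Module.length Λ (F₂ C) = Module.length Λ (F₂ A) + Module.length Λ (F₂ B) :=
    fun e => length_preradical_add F₂
      (fun M N _ _ _ _ h x hx => ⟨tr_map S M N h x hx.1, rej_map S M N h x hx.2⟩) e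
  let d : FGMod Λ → ℤ := fun A =>
    ((Module.length Λ (F₁ A.1)).toNat : ℤ) - (Module.length Λ (F₂ A.1)).toNat
  have hadd : ∀ A B C : FGMod Λ, Nonempty ((C.1 : Type) ≃ₗ[Λ] ((A.1 : Type) × (B.1 : Type))) →
      d C = d A + d B := by
    rintro A B C ⟨e⟩
    have := A.2
    have := B.2
    simp only [d]
    rw [hF₁ e, hF₂ e, ENat.toNat_add Module.length_ne_top Module.length_ne_top,
      ENat.toNat_add Module.length_ne_top Module.length_ne_top]
    push_cast
    ring
  have hproj : ∀ P : FGMod Λ, Module.Projective Λ P.1 → d P = 0 := by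
    intro P hP
    -- a nonzero composite `S → P → S` would split `S` off `P`
    have hle : tr S P.1 ≤ rej (Λ := Λ) S P.1 := by
      refine iSup_le fun f => le_iInf fun g => ?_
      rintro _ ⟨y, rfl⟩
      by_contra hne
      have hgf : g ∘ₗ f ≠ 0 := fun h0 => hne (LinearMap.congr_fun h0 y)
      have hb := LinearMap.bijective_of_ne_zero hgf
      let e := LinearEquiv.ofBijective (g ∘ₗ f) hb
      refine hS (Module.Projective.of_split f (e.symm.toLinearMap ∘ₗ g) ?_)
      ext x
      exact e.symm_apply_apply x
    have : F₂ P.1 = F₁ P.1 := inf_eq_left.2 hle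
    have h := congrArg (fun N : Submodule Λ P.1 => ((Module.length Λ N).toNat : ℤ)) this
    exact sub_eq_zero.2 h.symm
  obtain ⟨ψ, hψ⟩ := exists_K0_hom d hadd hproj
  refine ⟨ψ, ?_, fun N _ _ hN hf => ?_⟩
  · have h1 : F₁ S = ⊤ := by
      refine eq_top_iff.2 fun x _ => ?_
      exact le_iSup (fun f : S →ₗ[Λ] S => LinearMap.range f) LinearMap.id ⟨x, rfl⟩
    have h2 : F₂ S = ⊥ := by
      refine eq_bot_iff.2 fun x hx => ?_
      exact (Submodule.mem_iInf _).1 hx.2 (LinearMap.id : S →ₗ[Λ] S)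
    have hSf : Module.Finite Λ S := inferInstance
    have : ψ (cl Λ S) = _ := hψ ⟨ModuleCat.of Λ S, hSf⟩
    rw [this]
    simp only [d]
    change ((Module.length Λ (F₁ S)).toNat : ℤ) - (Module.length Λ (F₂ S)).toNat ≠ 0
    rw [h1, h2, Module.length_top, Module.length_bot, Module.length_eq_one]
    simp
  · have h1 : F₁ N = ⊥ := by
      refine eq_bot_iff.2 (iSup_le fun f => ?_)
      rw [hf f, LinearMap.range_zero]
    have h2 : F₂ N = ⊥ := by
      refine eq_bot_iff.2 (inf_le_left.trans h1.le)
    have : ψ (cl Λ N) = _ := hψ ⟨ModuleCat.of Λ N, hN⟩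
    rw [this]
    simp only [d]
    change ((Module.length Λ (F₁ N)).toNat : ℤ) - (Module.length Λ (F₂ N)).toNat = 0
    rw [h1, h2, sub_self]

end Detect
end PhiDim
namespace PhiDim

variable {Λ : Type} [Ring Λ]

/-! ### Uniserial modules -/

section Uniserial

variable {A B C : Type} [AddCommGroup A] [AddCommGroup B] [AddCommGroup C]
  [Module Λ A] [Module Λ B] [Module Λ C]

/-- Uniseriality for an unbundled module. -/
def Uni (Λ : Type) [Ring Λ] (M : Type) [AddCommGroup M] [Module Λ M] : Prop :=
  ∀ N₁ N₂ : Submodule Λ M, N₁ ≤ N₂ ∨ N₂ ≤ N₁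

lemma Uni.of_injective (h : Uni Λ B) (f : A →ₗ[Λ] B) (hf : Function.Injective f) : Uni Λ A :=
  fun N₁ N₂ => (h (N₁.map f) (N₂.map f)).imp (Submodule.map_le_map_iff_of_injective hf _ _).1
    (Submodule.map_le_map_iff_of_injective hf _ _).1

lemma Uni.of_surjective (h : Uni Λ A) (f : A →ₗ[Λ] B) (hf : Function.Surjective f) : Uni Λ B :=
  fun N₁ N₂ => (h (N₁.comap f) (N₂.comap f)).imp
    (Submodule.comap_le_comap_iff_of_surjective hf).1
    (Submodule.comap_le_comap_iff_of_surjective hf).1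

lemma Uni.indec (h : Uni Λ A) [Nontrivial A] : Indec Λ (ModuleCat.of Λ A) := by
  refine ⟨‹_›, fun N N' hc => (h N N').imp (fun hle => ?_) (fun hle => ?_)⟩
  · rw [← inf_eq_left.2 hle]; exact hc.inf_eq_bot
  · rw [← inf_eq_right.2 hle]; exact hc.inf_eq_bot

/-- A map out of a uniserial module is injective as soon as it is injective on the image of some
nonzero map. -/
lemma Uni.injective_of_comp (h : Uni Λ B) (f : A →ₗ[Λ] B) (hf : f ≠ 0) (g : B →ₗ[Λ] C)
    (hgf : Function.Injective (g ∘ₗ f)) : Function.Injective g := by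
  rw [← LinearMap.ker_eq_bot]
  have hdis : ∀ x, x ∈ LinearMap.range f → x ∈ LinearMap.ker g → x = 0 := by
    rintro _ ⟨y, rfl⟩ hy
    have : y = 0 := hgf (by rw [map_zero]; exact hy)
    rw [this, map_zero]
  rcases h (LinearMap.ker g) (LinearMap.range f) with hle | hle
  · exact eq_bot_iff.2 fun x hx => hdis x (hle hx) hx
  · refine absurd (LinearMap.ext fun y => ?_) hf
    exact hdis (f y) ⟨y, rfl⟩ (hle ⟨y, rfl⟩)

lemma Uni.eq_top_of_sup (h : Uni Λ A) {N K : Submodule Λ A} (hs : N ⊔ K = ⊤) (hK : K ≠ ⊤) :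
    N = ⊤ := by
  rcases h N K with hle | hle
  · exact absurd (by rwa [sup_eq_right.2 hle] at hs) hK
  · rwa [sup_eq_left.2 hle] at hs

/-- A map into a uniserial module is surjective as soon as it is surjective modulo some proper
submodule. -/
lemma Uni.surjective_of_comp (h : Uni Λ B) (f : A →ₗ[Λ] B) (g : B →ₗ[Λ] C) [Nontrivial C]
    (hgf : Function.Surjective (g ∘ₗ f)) : Function.Surjective f := by
  rw [← LinearMap.range_eq_top]
  refine h.eq_top_of_sup (K := LinearMap.ker g) (eq_top_iff.2 fun x _ => ?_) fun htop => ?_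
  · obtain ⟨y, hy⟩ := hgf (g x)
    refine Submodule.mem_sup.2 ⟨f y, ⟨y, rfl⟩, x - f y, ?_, add_sub_cancel _ _⟩
    rw [LinearMap.mem_ker, map_sub, sub_eq_zero]
    exact hy.symm
  · obtain ⟨c, hc⟩ := exists_ne (0 : C)
    obtain ⟨y, hy⟩ := hgf c
    refine hc (hy ▸ ?_)
    have : f y ∈ LinearMap.ker g := htop ▸ trivial
    exact this

/-- A uniserial module of finite length has finitely many submodules. -/
lemma Uni.finite_submodule [IsArtinianRing Λ] [Module.Finite Λ A] (h : Uni Λ A) :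
    Finite (Submodule Λ A) := by
  let F : Submodule Λ A → Fin ((Module.length Λ A).toNat + 1) := fun N =>
    ⟨(Module.length Λ N).toNat, Nat.lt_succ_of_le
      (ENat.toNat_le_toNat (Module.length_le_of_injective N.subtype Subtype.val_injective) Module.length_ne_top)⟩
  have key : ∀ {N₁ N₂ : Submodule Λ A}, N₁ ≤ N₂ → F N₁ = F N₂ → N₁ = N₂ := by
    intro N₁ N₂ hle hF
    by_contra hne
    have h1 : Module.length Λ N₁ < Module.length Λ N₂ := by
      rw [Module.length_submodule, Module.length_submodule]
      exact Submodule.height_strictMono (lt_of_le_of_ne hle hne)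
    have h2 := congrArg Fin.val hF
    simp only [F] at h2
    rw [← ENat.natCast_toNat (Module.length_ne_top (R := Λ) (M := N₁)),
      ← ENat.natCast_toNat (Module.length_ne_top (R := Λ) (M := N₂)), h2] at h1
    exact lt_irrefl _ h1
  refine Finite.of_injective F fun N₁ N₂ hF => ?_
  rcases h N₁ N₂ with hle | hle
  · exact key hle hF
  · exact (key hle hF.symm).symm

end Uniserial

/-! ### Modules over a cyclic Nakayama algebra -/

namespace CyclicNakayama

variable {R : Type} [CommRing R] [Algebra R Λ]

lemma isArtinianRing (pres : CyclicNakayama R Λ) : IsArtinianRing Λ := by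
  have := pres.artinianBase
  have := pres.finiteAlgebra
  exact IsArtinianRing.of_finite R Λ

variable (pres : CyclicNakayama R Λ)

instance (i : ZMod pres.N) : Module.Finite Λ (pres.P i) := pres.P_finite i
instance (i : ZMod pres.N) : Module.Projective Λ (pres.P i) := pres.P_projective i
instance (i : ZMod pres.N) : IsSimpleModule Λ (pres.S i) := pres.S_simple i
instance (i : ZMod pres.N) : Nontrivial (pres.S i) := IsSimpleModule.nontrivial Λ _
instance : NeZero pres.N := ⟨by have := pres.three_le_N; omega⟩

lemma exists_top (i : ZMod pres.N) : ∃ f : pres.P i →ₗ[Λ] pres.S i, Function.Surjective f ∧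
    ∀ N : Submodule Λ (pres.P i), N ⊔ LinearMap.ker f = ⊤ → N = ⊤ := by
  obtain ⟨f, -, h⟩ := pres.P_cover i
  exact ⟨f, h⟩

/-- The projection of `P i` onto its simple top `S i`. -/
def top (i : ZMod pres.N) : pres.P i →ₗ[Λ] pres.S i := (pres.exists_top i).choose

lemma top_surjective (i : ZMod pres.N) : Function.Surjective (pres.top i) :=
  (pres.exists_top i).choose_spec.1

lemma le_ker_top {i : ZMod pres.N} {N : Submodule Λ (pres.P i)} (hN : N ≠ ⊤) :
    N ≤ LinearMap.ker (pres.top i) := by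
  by_contra hle
  have hco : IsCoatom (LinearMap.ker (pres.top i)) := by
    rw [← isSimpleModule_iff_isCoatom]
    exact IsSimpleModule.congr
      ((pres.top i).quotKerEquivOfSurjective (pres.top_surjective i))
  refine hN ((pres.exists_top i).choose_spec.2 N ?_)
  exact hco.2 _ (right_lt_sup.2 hle)

instance (i : ZMod pres.N) : Nontrivial (pres.P i) := (pres.top_surjective i).nontrivial

lemma P_indec (i : ZMod pres.N) : Indec Λ (pres.P i) := by
  refine ⟨inferInstance, fun N N' hc => ?_⟩
  by_contra! hne
  have h1 : N ≠ ⊤ := fun h => hne.2 (by have := hc.inf_eq_bot; rwa [h, top_inf_eq] at this)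
  have h2 : N' ≠ ⊤ := fun h => hne.1 (by have := hc.inf_eq_bot; rwa [h, inf_top_eq] at this)
  have h3 : LinearMap.ker (pres.top i) = ⊤ :=
    eq_top_iff.2 (hc.sup_eq_top ▸ sup_le (pres.le_ker_top h1) (pres.le_ker_top h2))
  obtain ⟨s, hs⟩ := exists_ne (0 : pres.S i)
  obtain ⟨x, rfl⟩ := pres.top_surjective i s
  have : x ∈ LinearMap.ker (pres.top i) := h3 ▸ trivial
  exact hs this

lemma P_uni (i : ZMod pres.N) : Uni Λ (pres.P i) := pres.nakayama _ (pres.P_finite i) (pres.P_indec i)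

lemma uni_of_indec (pres : CyclicNakayama R Λ) {M : Type} [AddCommGroup M] [Module Λ M] [h : Module.Finite Λ M]
    (hM : Indec Λ (ModuleCat.of Λ M)) : Uni Λ M :=
  pres.nakayama _ h hM

lemma exists_cover {M : Type} [AddCommGroup M] [Module Λ M] [Module.Finite Λ M] [Nontrivial M]
    (hM : Uni Λ M) : ∃ i, ∃ g : pres.P i →ₗ[Λ] M, Function.Surjective g := by
  obtain ⟨K, hK, -⟩ := (eq_top_or_exists_le_coatom (⊥ : Submodule Λ M)).resolve_left bot_ne_top
  have hs : IsSimpleModule Λ (M ⧸ K) := isSimpleModule_iff_isCoatom.2 hK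
  obtain ⟨i, ⟨e⟩⟩ := pres.S_complete (ModuleCat.of Λ (M ⧸ K)) hs
  have e' : (M ⧸ K) ≃ₗ[Λ] pres.S i := e
  have hq : Function.Surjective (e'.toLinearMap ∘ₗ K.mkQ) :=
    e'.surjective.comp K.mkQ_surjective
  obtain ⟨g, hg⟩ := Module.projective_lifting_property _ (pres.top i) hq
  refine ⟨i, g, hM.surjective_of_comp g (e'.toLinearMap ∘ₗ K.mkQ) ?_⟩
  rw [hg]
  exact pres.top_surjective i

lemma exists_nthSyzygy (pres : CyclicNakayama R Λ) (t : ℕ) (X : ModuleCat.{0} Λ) (hX : Module.Finite Λ X)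
    (hu : Uni Λ X) : ∃ Y : ModuleCat.{0} Λ, Module.Finite Λ Y ∧ IsNthSyzygy Λ t Y X := by
  have := pres.isArtinianRing
  induction t generalizing X with
  | zero => exact ⟨X, hX, ⟨LinearEquiv.refl Λ X⟩⟩
  | succ n ih =>
    have hZ : ∃ Z : ModuleCat.{0} Λ, Module.Finite Λ Z ∧ Uni Λ Z ∧ IsSyzygy Λ Z X := by
      rcases subsingleton_or_nontrivial X with hs | hn
      · refine ⟨X, hX, hu, X, LinearMap.id,
          ⟨Module.Projective.of_free, Function.surjective_id, fun N _ => Subsingleton.elim _ _⟩,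
          ⟨(LinearEquiv.ofTop _ (Subsingleton.elim _ _)).symm⟩⟩
      · obtain ⟨i, g, hg⟩ := pres.exists_cover hu
        refine ⟨ModuleCat.of Λ (LinearMap.ker g), ?_, ?_, pres.P i, g,
          ⟨inferInstance, hg, fun N hN => (pres.P_uni i).eq_top_of_sup hN fun h => ?_⟩,
          ⟨LinearEquiv.refl Λ _⟩⟩
        · exact (inferInstance : Module.Finite Λ (LinearMap.ker g))
        · exact (pres.P_uni i).of_injective (LinearMap.ker g).subtype Subtype.val_injective
        · obtain ⟨x, hx⟩ := exists_ne (0 : X)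
          obtain ⟨y, rfl⟩ := hg x
          have : y ∈ LinearMap.ker g := h ▸ trivial
          exact hx this
    obtain ⟨Z, hZ, hZu, hZX⟩ := hZ
    obtain ⟨Y, hY, hYZ⟩ := ih Z hZ hZu
    exact ⟨Y, hY, Z, hZX, hYZ⟩

lemma hex (pres : CyclicNakayama R Λ) (X : ModuleCat.{0} Λ) (hX : Module.Finite Λ X) (hi : Indec Λ X) (t : ℕ) :
    ∃ Y : ModuleCat.{0} Λ, Module.Finite Λ Y ∧ IsNthSyzygy Λ t Y X :=
  pres.exists_nthSyzygy t X hX (pres.nakayama X hX hi)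

/-- Simple modules are not projective, because the Kupisch series has no entry `1`. -/
lemma S_not_projective (i : ZMod pres.N) : ¬ Module.Projective Λ (pres.S i) := by
  intro hproj
  obtain ⟨s, hs⟩ := Module.projective_lifting_property (pres.top i) LinearMap.id
    (pres.top_surjective i)
  have hsurj : Function.Surjective s := (pres.P_uni i).surjective_of_comp s (pres.top i)
    (by rw [hs]; exact Function.surjective_id)
  have hinj : Function.Injective s := Function.LeftInverse.injective fun x => LinearMap.congr_fun hs x
  obtain ⟨σ, h0, h1, hl⟩ := pres.P_length i
  have hlen := Module.length_compositionSeries σ h0 h1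
  rw [← (LinearEquiv.ofBijective s ⟨hinj, hsurj⟩).length_eq, Module.length_eq_one, hl] at hlen
  have := pres.two_le_c i
  have h2 : pres.c i = 1 := by exact_mod_cast hlen
  omega

lemma exists_socle (pres : CyclicNakayama R Λ) (M : Type) [AddCommGroup M] [Module Λ M] [Module.Finite Λ M] [Nontrivial M] :
    ∃ k, ∃ f : pres.S k →ₗ[Λ] M, Function.Injective f := by
  have := pres.isArtinianRing
  obtain ⟨K, hK, -⟩ := (eq_bot_or_exists_atom_le (⊤ : Submodule Λ M)).resolve_left top_ne_bot
  have hs : IsSimpleModule Λ K := isSimpleModule_iff_isAtom.2 hK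
  obtain ⟨i, ⟨e⟩⟩ := pres.S_complete (ModuleCat.of Λ K) hs
  have e' : K ≃ₗ[Λ] pres.S i := e
  exact ⟨i, K.subtype ∘ₗ e'.symm.toLinearMap, Subtype.val_injective.comp e'.symm.injective⟩

/-- The socle of a uniserial module is simple. -/
lemma socle_unique {M : Type} [AddCommGroup M] [Module Λ M] (hM : Uni Λ M) {k l : ZMod pres.N}
    (f : pres.S k →ₗ[Λ] M) (hf : Function.Injective f) (g : pres.S l →ₗ[Λ] M)
    (hg : Function.Injective g) : k = l := by
  have key : ∀ {k l : ZMod pres.N} (f : pres.S k →ₗ[Λ] M) (_ : Function.Injective f)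
      (g : pres.S l →ₗ[Λ] M) (_ : Function.Injective g),
      LinearMap.range f ≤ LinearMap.range g → k = l := by
    intro k l f hf g hg hle
    let h : pres.S k →ₗ[Λ] pres.S l := (LinearEquiv.ofInjective g hg).symm.toLinearMap ∘ₗ
      (f.codRestrict (LinearMap.range g) fun x => hle ⟨x, rfl⟩)
    have hinj : Function.Injective h := by
      refine (LinearEquiv.ofInjective g hg).symm.injective.comp
        (g := (LinearEquiv.ofInjective g hg).symm) fun x y hxy => hf ?_
      exact congrArg Subtype.val hxy
    have hne : h ≠ 0 := by
      rintro h0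
      obtain ⟨x, hx⟩ := exists_ne (0 : pres.S k)
      exact hx (hinj (by rw [h0]; rfl))
    exact pres.S_distinct _ _ ⟨LinearEquiv.ofBijective h (LinearMap.bijective_of_ne_zero hne)⟩
  rcases hM (LinearMap.range f) (LinearMap.range g) with hle | hle
  · exact key f hf g hg hle
  · exact (key g hg f hf hle).symm

/-- The vertex of the socle of `P i`. -/
def soc (i : ZMod pres.N) : ZMod pres.N := (pres.exists_socle (pres.P i)).choose

/-- The inclusion of the socle of `P i`. -/
def socMap (i : ZMod pres.N) : pres.S (pres.soc i) →ₗ[Λ] pres.P i :=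
  (pres.exists_socle (pres.P i)).choose_spec.choose

lemma socMap_injective (i : ZMod pres.N) : Function.Injective (pres.socMap i) :=
  (pres.exists_socle (pres.P i)).choose_spec.choose_spec

lemma soc_eq {i k : ZMod pres.N} (f : pres.S k →ₗ[Λ] pres.P i) (hf : Function.Injective f) :
    pres.soc i = k :=
  pres.socle_unique (pres.P_uni i) _ (pres.socMap_injective i) f hf

lemma ne_zero_of_injective {k : ZMod pres.N} {M : Type} [AddCommGroup M] [Module Λ M]
    {f : pres.S k →ₗ[Λ] M} (hf : Function.Injective f) : f ≠ 0 := by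
  rintro rfl
  obtain ⟨x, hx⟩ := exists_ne (0 : pres.S k)
  exact hx (hf rfl)

end CyclicNakayama
end PhiDim
namespace PhiDim

lemma isSummand_of_retract {Λ A M : Type} [Ring Λ] [AddCommGroup A] [AddCommGroup M] [Module Λ A]
    [Module Λ M] (i : A →ₗ[Λ] M) (p : M →ₗ[Λ] A) (h : ∀ x, p (i x) = x) :
    IsSummand Λ (ModuleCat.of Λ A) (ModuleCat.of Λ M) := by
  refine ⟨LinearMap.range i, LinearMap.ker p, ⟨?_, ?_⟩,
    ⟨LinearEquiv.ofInjective i (Function.LeftInverse.injective h)⟩⟩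
  · rw [Submodule.disjoint_def]
    rintro _ ⟨y, rfl⟩ hy
    have : y = 0 := (h y).symm.trans hy
    rw [this, map_zero]
  · rw [codisjoint_iff, eq_top_iff]
    rintro x -
    refine Submodule.mem_sup.2 ⟨i (p x), ⟨p x, rfl⟩, x - i (p x), ?_, add_sub_cancel _ _⟩
    rw [LinearMap.mem_ker, map_sub, sub_eq_zero]
    exact (h (p x)).symm

/-- A subgroup on which some nonzero functional vanishes does not have full rank. -/
lemma rank_contra {G : Type 1} [AddCommGroup G] [Module.Finite ℤ G] (ψ : G →+ ℤ) (g : G)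
    (hg : ψ g ≠ 0) (K : AddSubgroup G) (hK : K ≤ ψ.ker)
    (h : Module.rank ℤ K = Module.rank ℤ (⊤ : AddSubgroup G)) : False := by
  have h1 := (LinearMap.ker ψ.toIntLinearMap).finrank_quotient_add_finrank
  rw [ψ.toIntLinearMap.quotKerEquivRange.finrank_eq] at h1
  have h2 : 0 < Module.finrank ℤ (LinearMap.range ψ.toIntLinearMap) := by
    rw [Module.finrank_pos_iff]
    exact ⟨⟨⟨_, ⟨g, rfl⟩⟩, 0, fun h0 => hg (congrArg Subtype.val h0)⟩⟩
  have h3 : Module.rank ℤ G ≤ Module.rank ℤ (LinearMap.ker ψ.toIntLinearMap) := by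
    have e : Module.rank ℤ (⊤ : AddSubgroup G) = Module.rank ℤ G := rank_top ℤ G
    rw [← e, ← h]
    exact Submodule.rank_mono (s := AddSubgroup.toIntSubmodule K)
      (t := LinearMap.ker ψ.toIntLinearMap) hK
  have h4 : Module.finrank ℤ G ≤ Module.finrank ℤ (LinearMap.ker ψ.toIntLinearMap) :=
    Module.finrank_le_finrank_of_rank_le_rank (by simpa using h3) (Module.rank_lt_aleph0 ℤ _)
  omega

namespace CyclicNakayama

variable {R Λ : Type} [CommRing R] [Ring Λ] [Algebra R Λ] (pres : CyclicNakayama R Λ)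

/-! ### `K₀` is finitely generated -/

/-- Index set for the quotients of the modules `P i`, which exhaust the indecomposables. -/
abbrev Idx : Type := Σ i : ZMod pres.N, Submodule Λ (pres.P i)

lemma finite_idx : Finite pres.Idx := by
  have := pres.isArtinianRing
  have : ∀ i, Finite (Submodule Λ (pres.P i)) := fun i => (pres.P_uni i).finite_submodule
  infer_instance

lemma quot_uni (p : pres.Idx) : Uni Λ (pres.P p.1 ⧸ p.2) :=
  (pres.P_uni p.1).of_surjective p.2.mkQ p.2.mkQ_surjective

lemma cl_mem (H : AddSubgroup (K0 Λ)) (hH : ∀ p : pres.Idx, cl Λ (pres.P p.1 ⧸ p.2) ∈ H) (n : ℕ) :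
    ∀ (M : Type) [AddCommGroup M] [Module Λ M] [Module.Finite Λ M],
      (Module.length Λ M).toNat ≤ n → cl Λ M ∈ H := by
  have := pres.isArtinianRing
  induction n with
  | zero =>
    intro M _ _ _ hl
    have h0 : Module.length Λ M = 0 :=
      (ENat.toNat_eq_zero.1 (Nat.le_zero.1 hl)).resolve_right Module.length_ne_top
    have := Module.length_eq_zero_iff.1 h0
    rw [cl_subsingleton]
    exact H.zero_mem
  | succ n ih =>
    intro M _ _ _ hl
    rcases subsingleton_or_nontrivial M with hs | hn
    · rw [cl_subsingleton]; exact H.zero_mem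
    by_cases hi : Indec Λ (ModuleCat.of Λ M)
    · obtain ⟨i, g, hg⟩ := pres.exists_cover (pres.uni_of_indec hi)
      rw [← cl_congr (g.quotKerEquivOfSurjective hg)]
      exact hH ⟨i, LinearMap.ker g⟩
    · have : ∃ N N' : Submodule Λ M, IsCompl N N' ∧ N ≠ ⊥ ∧ N' ≠ ⊥ := by
        by_contra! hno
        exact hi ⟨hn, fun N N' hc => or_iff_not_imp_left.2 (hno N N' hc)⟩
      obtain ⟨N, N', hc, hN, hN'⟩ := this
      have e := (Submodule.prodEquivOfIsCompl N N' hc).symm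
      rw [cl_add e]
      have hlen := e.length_eq
      rw [Module.length_prod] at hlen
      have hlt := congrArg ENat.toNat hlen
      rw [ENat.toNat_add Module.length_ne_top Module.length_ne_top] at hlt
      have pos : ∀ {K : Submodule Λ M}, K ≠ ⊥ → 0 < (Module.length Λ K).toNat := by
        intro K hK
        have := Submodule.nontrivial_iff_ne_bot.2 hK
        refine Nat.pos_of_ne_zero fun h0 => ?_
        exact (Module.length_pos (R := Λ) (M := K)).ne'
          ((ENat.toNat_eq_zero.1 h0).resolve_right Module.length_ne_top)
      have p1 := pos hN
      have p2 := pos hN'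
      exact H.add_mem (ih N (by omega)) (ih N' (by omega))

/-- `K₀` is generated by the classes of the quotients of the modules `P i`. -/
lemma eq_top_of_mem (H : AddSubgroup (K0 Λ)) (hH : ∀ p : pres.Idx, cl Λ (pres.P p.1 ⧸ p.2) ∈ H) :
    H = ⊤ := by
  refine K0_eq_top H fun A => ?_
  have := A.2
  exact pres.cl_mem H hH _ A.1 le_rfl

lemma finite_K0 (pres : CyclicNakayama R Λ) : Module.Finite ℤ (K0 Λ) := by
  have := pres.finite_idx
  refine ⟨(Submodule.fg_def).2
    ⟨Set.range fun p : pres.Idx => cl Λ (pres.P p.1 ⧸ p.2), Set.finite_range _, ?_⟩⟩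
  have h := pres.eq_top_of_mem
    (Submodule.span ℤ (Set.range fun p : pres.Idx => cl Λ (pres.P p.1 ⧸ p.2))).toAddSubgroup
    (fun p => Submodule.subset_span ⟨p, rfl⟩)
  exact Submodule.toAddSubgroup_injective h

/-! ### Vanishing of `φ` makes the socles of the `P i` exhaust the simple modules -/

/-- The direct sum of one copy of each quotient of each `P i`. -/
abbrev Tot : Type := ∀ p : pres.Idx, pres.P p.1 ⧸ p.2

lemma closure_addGens_tot :
    AddSubgroup.closure (addGens Λ (ModuleCat.of Λ pres.Tot) 0) = ⊤ := by
  classical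
  refine pres.eq_top_of_mem _ fun p => ?_
  rcases subsingleton_or_nontrivial (pres.P p.1 ⧸ p.2) with hs | hn
  · rw [cl_subsingleton]; exact AddSubgroup.zero_mem _
  refine AddSubgroup.subset_closure ⟨ModuleCat.of Λ (pres.P p.1 ⧸ p.2), (pres.quot_uni p).indec,
    isSummand_of_retract (LinearMap.single Λ (fun p : pres.Idx => pres.P p.1 ⧸ p.2) p)
      (LinearMap.proj p) fun x => Pi.single_eq_same (M := fun p : pres.Idx => (pres.P p.1 ⧸ p.2)) p x,
    ⟨ModuleCat.of Λ (pres.P p.1 ⧸ p.2), (inferInstance : Module.Finite Λ (pres.P p.1 ⧸ p.2))⟩,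
    ⟨LinearEquiv.refl Λ _⟩, rfl⟩

/-- If `φ` vanishes, every simple module is the socle of some `P i`. -/
lemma soc_surjective_of_phiDim (h : phiDim Λ = 0) : Function.Surjective pres.soc := by
  have := pres.isArtinianRing
  have := pres.finite_idx
  have := pres.finite_K0
  have hfin : Module.Finite Λ pres.Tot := inferInstance
  have hphi : phi Λ (ModuleCat.of Λ pres.Tot) = 0 := by
    have := (ENat.iSup_eq_zero.1 h) ⟨ModuleCat.of Λ pres.Tot, hfin⟩
    exact_mod_cast this
  have hrank := rank_one_eq_of_phi_eq_zero pres.hex _ hfin hphi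
  unfold syzygyRank at hrank
  rw [closure_addGens_eq pres.hex _ hfin 1, pres.closure_addGens_tot] at hrank
  intro k
  by_contra! hk
  obtain ⟨ψ, hψ, hψ0⟩ := exists_detect (pres.S k) (pres.S_not_projective k)
  -- the detecting homomorphism kills the image of `L`
  have hker : (⊤ : AddSubgroup (K0 Λ)).map (Lpow Λ 1) ≤ ψ.ker := by
    rw [AddSubgroup.map_le_iff_le_comap]
    refine (pres.eq_top_of_mem _ fun p => ?_).ge
    change ψ (L Λ (cl Λ (pres.P p.1 ⧸ p.2))) = 0
    rw [L_cl p.2.mkQ p.2.mkQ_surjective]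
    refine hψ0 _ fun f => ?_
    by_contra hf
    refine hk p.1 (pres.soc_eq ((LinearMap.ker p.2.mkQ).subtype ∘ₗ f) ?_)
    exact Subtype.val_injective.comp (LinearMap.injective_of_ne_zero hf)
  exact rank_contra ψ _ hψ _ hker hrank

lemma soc_injective_of_phiDim (h : phiDim Λ = 0) : Function.Injective pres.soc :=
  Finite.injective_iff_surjective.2 (pres.soc_surjective_of_phiDim h)

end CyclicNakayama
end PhiDim
namespace PhiDim

/-! ### A criterion for injectivity -/

section Baer

variable {Λ : Type} [Ring Λ]

/-- A finitely generated module that splits off from every finitely generated overmodule is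
injective: form the pushout of an ideal inclusion. -/
lemma baer_of_split {Q : Type} [AddCommGroup Q] [Module Λ Q] [Module.Finite Λ Q]
    (h : ∀ (M : Type) [AddCommGroup M] [Module Λ M] [Module.Finite Λ M] (ι : Q →ₗ[Λ] M),
      Function.Injective ι → ∃ r : M →ₗ[Λ] Q, ∀ x, r (ι x) = x) : Module.Baer Λ Q := by
  intro I φ
  let D : Submodule Λ (Λ × Q) := LinearMap.range (I.subtype.prod (-φ))
  obtain ⟨r, hr⟩ := h ((Λ × Q) ⧸ D) (D.mkQ ∘ₗ LinearMap.inr Λ Λ Q) (by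
    rw [← LinearMap.ker_eq_bot, eq_bot_iff]
    intro q hq
    obtain ⟨x, hx⟩ := (Submodule.Quotient.mk_eq_zero D).1 hq
    have h1 : (x : Λ) = 0 := congrArg Prod.fst hx
    have h2 : -φ x = q := congrArg Prod.snd hx
    have h3 : x = 0 := Subtype.ext h1
    rw [Submodule.mem_bot, ← h2, h3, map_zero, neg_zero])
  refine ⟨r ∘ₗ D.mkQ ∘ₗ LinearMap.inl Λ Λ Q, fun x hx => ?_⟩
  rw [← hr (φ ⟨x, hx⟩)]
  refine congrArg r ((Submodule.Quotient.eq D).2 ⟨⟨x, hx⟩, ?_⟩)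
  ext <;> simp

/-- Injectivity is inherited along a split surjection with injective kernel and image. -/
lemma baer_of_section {Q P : Type} [AddCommGroup Q] [Module Λ Q] [AddCommGroup P] [Module Λ P]
    (h : Q →ₗ[Λ] P) (s : P →ₗ[Λ] Q) (hs : ∀ x, h (s x) = x) (hP : Module.Baer Λ P)
    (hK : Module.Baer Λ (LinearMap.ker h)) : Module.Baer Λ Q := by
  intro I g
  obtain ⟨a, ha⟩ := hP I (h ∘ₗ g)
  obtain ⟨b, hb⟩ := hK I ((g - s ∘ₗ h ∘ₗ g).codRestrict (LinearMap.ker h) fun x => by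
    simp [hs])
  refine ⟨s ∘ₗ a + (LinearMap.ker h).subtype ∘ₗ b, fun x hx => ?_⟩
  simp [ha x hx, hb x hx]

lemma baer_of_retract {Q P : Type} [AddCommGroup Q] [Module Λ Q] [AddCommGroup P] [Module Λ P]
    (h : Q →ₗ[Λ] P) (s : P →ₗ[Λ] Q) (hs : ∀ x, h (s x) = x) (hQ : Module.Baer Λ Q) :
    Module.Baer Λ P := by
  intro I g
  obtain ⟨a, ha⟩ := hQ I (s ∘ₗ g)
  exact ⟨h ∘ₗ a, fun x hx => by simp [ha x hx, hs]⟩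

/-- Over a noetherian ring which is injective over itself, all free modules are injective. -/
lemma baer_finsupp [IsNoetherianRing Λ] (hΛ : Module.Baer Λ Λ) (X : Type) :
    Module.Baer Λ (X →₀ Λ) := by
  classical
  intro I g
  obtain ⟨t, ht⟩ := (IsNoetherian.noetherian (⊤ : Submodule Λ I))
  let T : Finset X := t.biUnion fun x => (g x).support
  have hT : ∀ x, g x ∈ Finsupp.supported Λ Λ (T : Set X) := by
    have : (⊤ : Submodule Λ I) ≤ (Finsupp.supported Λ Λ (T : Set X)).comap g := by
      rw [← ht, Submodule.span_le]
      intro x hx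
      refine (Finsupp.mem_supported Λ _).2 ?_
      exact_mod_cast Finset.subset_biUnion_of_mem (fun x => (g x).support) hx
    exact fun x => this trivial
  choose a ha using fun m : X => hΛ I (Finsupp.lapply m ∘ₗ g)
  refine ⟨∑ m ∈ T, Finsupp.lsingle m ∘ₗ a m, fun x hx => ?_⟩
  have hsub : (g ⟨x, hx⟩).support ⊆ T := by
    exact_mod_cast (Finsupp.mem_supported Λ _).1 (hT ⟨x, hx⟩)
  rw [LinearMap.sum_apply]
  calc ∑ m ∈ T, (Finsupp.lsingle m ∘ₗ a m) x = ∑ m ∈ T, Finsupp.single m (g ⟨x, hx⟩ m) :=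
        Finset.sum_congr rfl fun m _ => by simp [ha m x hx]
    _ = (g ⟨x, hx⟩).sum Finsupp.single :=
        (Finsupp.sum_of_support_subset _ hsub _ fun _ _ => Finsupp.single_zero _).symm
    _ = g ⟨x, hx⟩ := Finsupp.sum_single _

end Baer

namespace CyclicNakayama

variable {R Λ : Type} [CommRing R] [Ring Λ] [Algebra R Λ] (pres : CyclicNakayama R Λ)

/-! ### Distinct socles force self-injectivity -/

/-- If the `P i` have pairwise distinct socles, no `P v` embeds properly in a uniserial module:
the embedding lifts to the projective cover `P i` of that module, so `P v` and `P i` have the same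
socle, hence `i = v` and lengths agree. -/
lemma surjective_of_injective (hσ : Function.Injective pres.soc) {v : ZMod pres.N} {W : Type}
    [AddCommGroup W] [Module Λ W] [Module.Finite Λ W] (hW : Uni Λ W) (ι : pres.P v →ₗ[Λ] W)
    (hι : Function.Injective ι) : Function.Surjective ι := by
  have := pres.isArtinianRing
  have : Nontrivial W := hι.nontrivial
  obtain ⟨i, g, hg⟩ := pres.exists_cover hW
  obtain ⟨s, hs⟩ := Module.projective_lifting_property g ι hg
  have hsi : Function.Injective s := by
    rw [← hs] at hι
    exact Function.Injective.of_comp hι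
  obtain rfl : i = v := hσ (pres.soc_eq (s ∘ₗ pres.socMap v) (hsi.comp (pres.socMap_injective v)))
  rw [← hs]
  exact hg.comp (IsArtinian.surjective_of_injective_endomorphism s hsi)

lemma P_split (hσ : Function.Injective pres.soc) (v : ZMod pres.N) (M : Type) [AddCommGroup M]
    [Module Λ M] [Module.Finite Λ M] (ι : pres.P v →ₗ[Λ] M) (hι : Function.Injective ι) :
    ∃ r : M →ₗ[Λ] pres.P v, ∀ x, r (ι x) = x := by
  have := pres.isArtinianRing
  -- a submodule `N` maximal with `N ∩ ι(P v) = 0`; then `P v` is essential in `M / N`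
  obtain ⟨N, hN, hmax⟩ := (wellFounded_gt (α := Submodule Λ M)).has_min
    {N : Submodule Λ M | N.comap ι = ⊥} ⟨⊥, by
      change (⊥ : Submodule Λ M).comap ι = ⊥
      rw [Submodule.comap_bot, LinearMap.ker_eq_bot.2 hι]⟩
  let j : pres.P v →ₗ[Λ] M ⧸ N := N.mkQ ∘ₗ ι
  have hj : Function.Injective j := by
    rw [← LinearMap.ker_eq_bot, LinearMap.ker_comp, Submodule.ker_mkQ]
    exact hN
  have hess : ∀ U : Submodule Λ (M ⧸ N), U.comap j = ⊥ → U = ⊥ := by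
    intro U hU
    have hle : N ≤ U.comap N.mkQ := Submodule.le_comap_mkQ N U
    have heq : U.comap N.mkQ = N := by
      by_contra hne
      exact hmax (U.comap N.mkQ) (by exact hU) (lt_of_le_of_ne hle (Ne.symm hne))
    rw [← Submodule.map_comap_eq_of_surjective N.mkQ_surjective U, heq, Submodule.mkQ_map_self]
  have : Nontrivial (M ⧸ N) := hj.nontrivial
  have hi : Indec Λ (ModuleCat.of Λ (M ⧸ N)) := by
    refine ⟨this, fun U U' hc => ?_⟩
    have hd : (U.comap j) ⊓ (U'.comap j) = ⊥ := by
      rw [← Submodule.comap_inf, hc.inf_eq_bot, Submodule.comap_bot, LinearMap.ker_eq_bot.2 hj]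
    refine (pres.P_uni v (U.comap j) (U'.comap j)).imp (fun hle => hess U ?_)
      (fun hle => hess U' ?_)
    · rwa [inf_eq_left.2 hle] at hd
    · rwa [inf_eq_right.2 hle] at hd
  have hsurj := pres.surjective_of_injective hσ (pres.uni_of_indec hi) j hj
  exact ⟨(LinearEquiv.ofBijective j ⟨hj, hsurj⟩).symm.toLinearMap ∘ₗ N.mkQ,
    fun x => (LinearEquiv.ofBijective j ⟨hj, hsurj⟩).symm_apply_apply x⟩

lemma baer_P (hσ : Function.Injective pres.soc) (v : ZMod pres.N) : Module.Baer Λ (pres.P v) :=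
  baer_of_split (pres.P_split hσ v)

lemma baer_fg (hσ : Function.Injective pres.soc) (n : ℕ) :
    ∀ (Q : Type) [AddCommGroup Q] [Module Λ Q] [Module.Finite Λ Q] [Module.Projective Λ Q],
      (Module.length Λ Q).toNat ≤ n → Module.Baer Λ Q := by
  have := pres.isArtinianRing
  induction n with
  | zero =>
    intro Q _ _ _ _ hl
    have h0 : Module.length Λ Q = 0 :=
      (ENat.toNat_eq_zero.1 (Nat.le_zero.1 hl)).resolve_right Module.length_ne_top
    have := Module.length_eq_zero_iff.1 h0
    exact fun I g => ⟨0, fun x hx => Subsingleton.elim _ _⟩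
  | succ n ih =>
    intro Q _ _ _ _ hl
    rcases subsingleton_or_nontrivial Q with hs | hn
    · exact fun I g => ⟨0, fun x hx => Subsingleton.elim _ _⟩
    -- split off the projective cover of a simple quotient of `Q`
    obtain ⟨K, hK, -⟩ := (eq_top_or_exists_le_coatom (⊥ : Submodule Λ Q)).resolve_left bot_ne_top
    have hsim : IsSimpleModule Λ (Q ⧸ K) := isSimpleModule_iff_isCoatom.2 hK
    obtain ⟨i, ⟨e⟩⟩ := pres.S_complete (ModuleCat.of Λ (Q ⧸ K)) hsim
    have e' : (Q ⧸ K) ≃ₗ[Λ] pres.S i := e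
    obtain ⟨h, hh⟩ := Module.projective_lifting_property (pres.top i)
      (e'.toLinearMap ∘ₗ K.mkQ) (pres.top_surjective i)
    have hsurj : Function.Surjective h := (pres.P_uni i).surjective_of_comp h (pres.top i)
      (by rw [hh]; exact e'.surjective.comp K.mkQ_surjective)
    obtain ⟨s, hs⟩ := Module.projective_lifting_property h LinearMap.id hsurj
    have hs' : ∀ x, h (s x) = x := fun x => LinearMap.congr_fun hs x
    refine baer_of_section h s hs' (pres.baer_P hσ i) ?_
    have hpr : Module.Projective Λ (LinearMap.ker h) :=
      Module.Projective.of_split (LinearMap.ker h).subtype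
        ((LinearMap.id - s ∘ₗ h).codRestrict (LinearMap.ker h) fun x => by simp [hs']) (by
          ext x
          have : h x = 0 := x.2
          simp [this])
    have hne : LinearMap.ker h ≠ ⊤ := by
      intro htop
      obtain ⟨x, hx⟩ := exists_ne (0 : pres.P i)
      obtain ⟨y, rfl⟩ := hsurj x
      have : y ∈ LinearMap.ker h := htop ▸ trivial
      exact hx this
    refine ih _ (Nat.le_of_lt_succ (lt_of_lt_of_le ?_ hl))
    have hlt := Submodule.length_lt hne
    rw [← ENat.natCast_toNat (Module.length_ne_top (R := Λ) (M := LinearMap.ker h)),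
      ← ENat.natCast_toNat (Module.length_ne_top (R := Λ) (M := Q))] at hlt
    exact_mod_cast hlt

lemma injective_of_soc_injective (hσ : Function.Injective pres.soc) (M : Type) [AddCommGroup M]
    [Module Λ M] [hM : Module.Projective Λ M] : Module.Injective Λ M := by
  have := pres.isArtinianRing
  obtain ⟨s, hs⟩ := hM.out
  exact (baer_of_retract _ s hs
    (baer_finsupp (pres.baer_fg hσ _ Λ le_rfl) M)).injective

end CyclicNakayama
end PhiDim
namespace PhiDim

namespace CyclicNakayama

variable {R Λ : Type} [CommRing R] [Ring Λ] [Algebra R Λ] (pres : CyclicNakayama R Λ)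

/-! ### Self-injectivity makes the syzygy operator injective -/

lemma exists_of_soc_eq {j k : ZMod pres.N} (h : pres.soc j = k) :
    ∃ f : pres.S k →ₗ[Λ] pres.P j, Function.Injective f := by
  subst h
  exact ⟨_, pres.socMap_injective j⟩

/-- A uniserial module with the same socle as the injective module `P j` embeds in `P j`. -/
lemma exists_embedding {j k : ZMod pres.N} (hP : Module.Injective Λ (pres.P j))
    (hk : pres.soc j = k) {M : Type} [AddCommGroup M] [Module Λ M] (hM : Uni Λ M)
    (f : pres.S k →ₗ[Λ] M) (hf : Function.Injective f) :
    ∃ h : M →ₗ[Λ] pres.P j, Function.Injective h := by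
  obtain ⟨g, hg⟩ := pres.exists_of_soc_eq hk
  obtain ⟨h, hh⟩ := hP.out f hf g
  refine ⟨h, hM.injective_of_comp f (pres.ne_zero_of_injective hf) h ?_⟩
  have : h ∘ₗ f = g := LinearMap.ext hh
  rwa [this]

/-- Over a self-injective algebra `P i` is the injective envelope of its socle, so that the socle
determines `i`. -/
lemma soc_injective_of_injective (hinj : ∀ i, Module.Injective Λ (pres.P i)) :
    Function.Injective pres.soc := by
  intro i j hij
  obtain ⟨h, hh⟩ := pres.exists_embedding (hinj j) hij.symm (pres.P_uni i) (pres.socMap i)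
    (pres.socMap_injective i)
  obtain ⟨r, hr⟩ := (hinj i).out h hh LinearMap.id
  have hsurj : Function.Surjective h :=
    (pres.P_uni j).surjective_of_comp h r fun x => ⟨x, hr x⟩
  have htop : Function.Surjective (pres.top j ∘ₗ h) := (pres.top_surjective j).comp hsurj
  have hco : ∀ {k} (f : pres.P i →ₗ[Λ] pres.S k), Function.Surjective f →
      IsCoatom (LinearMap.ker f) := fun f hf => by
    rw [← isSimpleModule_iff_isCoatom]
    exact IsSimpleModule.congr (f.quotKerEquivOfSurjective hf)
  have hle := pres.le_ker_top (hco _ htop).1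
  have heq : LinearMap.ker (pres.top j ∘ₗ h) = LinearMap.ker (pres.top i) :=
    ((hco _ htop).le_iff_eq (hco _ (pres.top_surjective i)).1).1 hle |>.symm
  exact pres.S_distinct i j
    ⟨((pres.top i).quotKerEquivOfSurjective (pres.top_surjective i)).symm.trans
      ((Submodule.quotEquivOfEq _ _ heq.symm).trans
        ((pres.top j ∘ₗ h).quotKerEquivOfSurjective htop))⟩

lemma L_injective [IsArtinianRing Λ] (hinj : ∀ i, Module.Injective Λ (pres.P i)) :
    Function.Injective (L Λ) := by
  have := pres.finite_K0
  have hσ : Function.Surjective pres.soc :=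
    Finite.injective_iff_surjective.1 (pres.soc_injective_of_injective hinj)
  -- every indecomposable embeds in some `P j`, hence is a syzygy
  have hrange : (L Λ).range = ⊤ := by
    refine pres.eq_top_of_mem _ fun p => ?_
    rcases subsingleton_or_nontrivial (pres.P p.1 ⧸ p.2) with hs | hn
    · rw [cl_subsingleton]; exact AddSubgroup.zero_mem _
    obtain ⟨k, f, hf⟩ := pres.exists_socle (pres.P p.1 ⧸ p.2)
    obtain ⟨j, hj⟩ := hσ k
    obtain ⟨h, hh⟩ := pres.exists_embedding (hinj j) hj (pres.quot_uni p) f hf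
    refine ⟨cl Λ (pres.P j ⧸ LinearMap.range h), ?_⟩
    rw [L_cl (LinearMap.range h).mkQ (Submodule.mkQ_surjective _)]
    exact cl_congr ((LinearEquiv.ofEq _ _ (Submodule.ker_mkQ _)).trans
      (LinearEquiv.ofInjective h hh).symm)
  -- a surjective endomorphism of a noetherian module is injective
  exact IsNoetherian.injective_of_surjective_endomorphism (L Λ).toIntLinearMap
    (AddMonoidHom.range_eq_top.1 hrange)

end CyclicNakayama

/-- For a cyclic Nakayama artin algebra of infinite global dimension, `φdim Λ = 0`
iff `Λ` is self-injective (every projective module is injective). -/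
theorem phiDim_eq_zero_iff_selfInjective {R Λ : Type} [CommRing R] [Ring Λ] [Algebra R Λ]
    (pres : CyclicNakayama R Λ) (hglob : HasInfiniteGlobalDim Λ) :
    phiDim Λ = 0 ↔
      (∀ M : ModuleCat.{0} Λ, Module.Projective Λ M → Module.Injective Λ M) := by
  have := pres.isArtinianRing
  refine ⟨fun h M hM => pres.injective_of_soc_injective (pres.soc_injective_of_phiDim h) M,
    fun h => ?_⟩
  have hL : Function.Injective (L Λ) := pres.L_injective fun i => h _ (pres.P_projective i)
  refine ENat.iSup_eq_zero.2 fun M => ?_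
  rw [phi_eq_zero_of_injective pres.hex hL M.1 M.2, Nat.cast_zero]

end PhiDim
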